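/- For z, y ∈ k^×, the formulas defining L̃_6(z,y) satisfy the defining relations of H_k, so they endow the 6-dimensional k-vector space with an H_k-module structure, and the H_k-module L̃_6(z,y) is simple. -/

import Mathlib

/-- The defining relations of the affine Hecke algebra of type `A_2` (for `Gl_3`),
on the free algebra on four generators `T = X 0`, `T⁻¹ = X 1`, `S_1 = X 2`, `S_2 = X 3`. -/
inductive HeckeRel (R : Type) [CommRing R] (q : R) :
    FreeAlgebra R (Fin 4) → FreeAlgebra R (Fin 4) → Prop
  | TTinv : HeckeRel R q (FreeAlgebra.ι R 0 * FreeAlgebra.ι R 1) 1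
  | TinvT : HeckeRel R q (FreeAlgebra.ι R 1 * FreeAlgebra.ι R 0) 1
  | quad : HeckeRel R q
      ((FreeAlgebra.ι R 2 + 1) * (FreeAlgebra.ι R 2 - algebraMap R (FreeAlgebra R (Fin 4)) q)) 0
  | T3S1 : HeckeRel R q (FreeAlgebra.ι R 0 ^ 3 * FreeAlgebra.ι R 2)
      (FreeAlgebra.ι R 2 * FreeAlgebra.ι R 0 ^ 3)
  | braid : HeckeRel R q (FreeAlgebra.ι R 2 * FreeAlgebra.ι R 3 * FreeAlgebra.ι R 2)
      (FreeAlgebra.ι R 3 * FreeAlgebra.ι R 2 * FreeAlgebra.ι R 3)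
  | TS2 : HeckeRel R q (FreeAlgebra.ι R 0 * FreeAlgebra.ι R 3)
      (FreeAlgebra.ι R 2 * FreeAlgebra.ι R 0)

/-- The affine Hecke algebra `H_R` with parameter `q ∈ R`. -/
abbrev HeckeAlg (R : Type) [CommRing R] (q : R) := RingQuot (HeckeRel R q)

namespace HeckeAlg

variable (R : Type) [CommRing R] (q : R)

noncomputable def gen (i : Fin 4) : HeckeAlg R q :=
  RingQuot.mkAlgHom R (HeckeRel R q) (FreeAlgebra.ι R i)

noncomputable def T : HeckeAlg R q := gen R q 0
noncomputable def Tinv : HeckeAlg R q := gen R q 1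
noncomputable def S1 : HeckeAlg R q := gen R q 2
noncomputable def S2 : HeckeAlg R q := gen R q 3

theorem T_mul_Tinv : T R q * Tinv R q = 1 := by
  simpa [T, Tinv, gen, map_mul, map_one] using
    RingQuot.mkAlgHom_rel R (HeckeRel.TTinv (R := R) (q := q))

theorem Tinv_mul_T : Tinv R q * T R q = 1 := by
  simpa [T, Tinv, gen, map_mul, map_one] using
    RingQuot.mkAlgHom_rel R (HeckeRel.TinvT (R := R) (q := q))

theorem quad_rel : (S1 R q + 1) * (S1 R q - algebraMap R (HeckeAlg R q) q) = 0 := by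
  simpa [S1, gen, map_mul, map_add, map_sub, map_one, map_zero, AlgHom.commutes] using
    RingQuot.mkAlgHom_rel R (HeckeRel.quad (R := R) (q := q))

theorem T3_mul_S1 : T R q ^ 3 * S1 R q = S1 R q * T R q ^ 3 := by
  simpa [T, S1, gen, map_mul, map_pow] using
    RingQuot.mkAlgHom_rel R (HeckeRel.T3S1 (R := R) (q := q))

theorem braid_rel : S1 R q * S2 R q * S1 R q = S2 R q * S1 R q * S2 R q := by
  simpa [S1, S2, gen, map_mul] using
    RingQuot.mkAlgHom_rel R (HeckeRel.braid (R := R) (q := q))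

theorem T_mul_S2 : T R q * S2 R q = S1 R q * T R q := by
  simpa [T, S1, S2, gen, map_mul] using
    RingQuot.mkAlgHom_rel R (HeckeRel.TS2 (R := R) (q := q))

/-- The canonical (base change) ring homomorphism `H_R → H_S` induced by a ring
homomorphism `R → S` sending the parameter `q` to the parameter `q'`. -/
noncomputable def map {R S : Type} [CommRing R] [CommRing S] (f : R →+* S) (q : R) (q' : S)
    (h : f q = q') : HeckeAlg R q →+* HeckeAlg S q' := by
  subst h
  letI : Algebra R (HeckeAlg S (f q)) :=
    RingHom.toAlgebra' ((algebraMap S (HeckeAlg S (f q))).comp f)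
      (fun c x => by simpa using Algebra.commutes (f c) x)
  refine RingQuot.lift
    ⟨((FreeAlgebra.lift R fun i => gen S (f q) i : _ →ₐ[R] HeckeAlg S (f q)) :
        FreeAlgebra R (Fin 4) →+* HeckeAlg S (f q)), ?_⟩
  have key : ∀ i : Fin 4,
      (FreeAlgebra.lift R fun j => gen S (f q) j) (FreeAlgebra.ι R i) = gen S (f q) i :=
    fun i => FreeAlgebra.lift_ι_apply _ _
  have keyq : (FreeAlgebra.lift R fun j => gen S (f q) j)
      (algebraMap R (FreeAlgebra R (Fin 4)) q) = algebraMap S (HeckeAlg S (f q)) (f q) := by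
    rw [AlgHom.commutes]
    rfl
  intro a b hab
  cases hab with
  | TTinv => simpa [key, T, Tinv] using T_mul_Tinv S (f q)
  | TinvT => simpa [key, T, Tinv] using Tinv_mul_T S (f q)
  | quad => simpa [key, keyq, S1] using quad_rel S (f q)
  | T3S1 => simpa [key, T, S1] using T3_mul_S1 S (f q)
  | braid => simpa [key, S1, S2] using braid_rel S (f q)
  | TS2 => simpa [key, T, S1, S2] using T_mul_S2 S (f q)

/-- `S_1⁻¹ = q⁻¹ (S_1 - q + 1)`, where `qi` is an inverse of `q` in `R`. -/
noncomputable def S1i (qi : R) : HeckeAlg R q :=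
  algebraMap R (HeckeAlg R q) qi * (S1 R q - algebraMap R (HeckeAlg R q) q + 1)

/-- `S_2⁻¹ = q⁻¹ (S_2 - q + 1)`, where `qi` is an inverse of `q` in `R`. -/
noncomputable def S2i (qi : R) : HeckeAlg R q :=
  algebraMap R (HeckeAlg R q) qi * (S2 R q - algebraMap R (HeckeAlg R q) q + 1)

/-- The Bernstein elements `Y_1 = q S_1⁻¹ S_2⁻¹ T`, `Y_2 = S_2⁻¹ T S_1`,
`Y_3 = q⁻¹ T S_1 S_2`, where `qi` is an inverse of `q` in `R`. -/
noncomputable def Y (qi : R) : Fin 3 → HeckeAlg R q :=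
  ![algebraMap R (HeckeAlg R q) q * S1i R q qi * S2i R q qi * T R q,
    S2i R q qi * T R q * S1 R q,
    algebraMap R (HeckeAlg R q) qi * T R q * S1 R q * S2 R q]

end HeckeAlg

noncomputable section

variable (p : ℕ) [Fact p.Prime] (k : Type) [Field k] [IsAlgClosed k] [CharP k p]

/-- `H_k = H ⊗_{ℤ[q]} k` with `q ↦ 0`. -/
abbrev Hk : Type := HeckeAlg k 0

/-- The action of `T` on a `1`-dimensional space: multiplication by `c`. -/
def Tmat1 (c : k) : Module.End k (Fin 1 → k) := Matrix.mulVecLin !![c]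

/-- The action of `T` on the `2`-dimensional space with basis `w, Tw` where
`T(Tw) = -y²w - yTw`. -/
def Tmat2 (y : k) : Module.End k (Fin 2 → k) := Matrix.mulVecLin !![0, -y^2; 1, -y]

/-- The action of `T` on the `3`-dimensional space with basis `v, Tv, T²v` where
`T(T²v) = zv`. -/
def Tmat3 (z : k) : Module.End k (Fin 3 → k) := Matrix.mulVecLin !![0, 0, z; 1, 0, 0; 0, 1, 0]

/-- The action of `T` on the `6`-dimensional space with basis `v, Tv, T²v, w, Tw, T²w`
where `T(T²v) = zv`, `T(T²w) = zw`. -/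
def Tmat6 (z : k) : Module.End k (Fin 6 → k) := Matrix.mulVecLin
  !![0, 0, z, 0, 0, 0;
     1, 0, 0, 0, 0, 0;
     0, 1, 0, 0, 0, 0;
     0, 0, 0, 0, 0, z;
     0, 0, 0, 1, 0, 0;
     0, 0, 0, 0, 1, 0]

/-- The action of `S_1` on `L_6(z,y)`: `S_1v = 0`, `S_1(Tv) = T²w`, `S_1(T²v) = -T²v`,
`S_1w = -w`, `S_1(Tw) = (y/z)T²v`, `S_1(T²w) = -T²w`. -/
def SL6 (z y : k) : Module.End k (Fin 6 → k) := Matrix.mulVecLin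
  !![0, 0, 0,  0,  0,     0;
     0, 0, 0,  0,  0,     0;
     0, 0, -1, 0,  y / z, 0;
     0, 0, 0,  -1, 0,     0;
     0, 0, 0,  0,  0,     0;
     0, 1, 0,  0,  0,     -1]

/-- The action of `S_1` on `L̃_6(z,y)`: as on `L_6(z,y)` except `S_1v = w`, `S_1(Tv) = 0`. -/
def SLt6 (z y : k) : Module.End k (Fin 6 → k) := Matrix.mulVecLin
  !![0, 0, 0,  0,  0,     0;
     0, 0, 0,  0,  0,     0;
     0, 0, -1, 0,  y / z, 0;
     1, 0, 0,  -1, 0,     0;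
     0, 0, 0,  0,  0,     0;
     0, 0, 0,  0,  0,     -1]

/-- The action of `S_1` on `K_6(z,y,y')`: `S_1v = w`, `S_1(Tv) = (y/y')T²w`,
`S_1(T²v) = -T²v`, `S_1w = -w`, `S_1(Tw) = (y'/z)T²v`, `S_1(T²w) = -T²w`. -/
def SK6 (z y y' : k) : Module.End k (Fin 6 → k) := Matrix.mulVecLin
  !![0, 0,      0,  0,  0,      0;
     0, 0,      0,  0,  0,      0;
     0, 0,      -1, 0,  y' / z, 0;
     1, 0,      0,  -1, 0,      0;
     0, 0,      0,  0,  0,      0;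
     0, y / y', 0,  0,  0,      -1]

/-- The action of `S_1` on `M_3(z,y)`: `S_1v = 0`, `S_1(Tv) = y⁻¹T²v`, `S_1(T²v) = -T²v`. -/
def SM3 (y : k) : Module.End k (Fin 3 → k) := Matrix.mulVecLin
  !![0, 0, 0; 0, 0, 0; 0, y⁻¹, -1]

/-- The action of `S_1` on `M̃_3(z,y)`: `S_1v = -v`, `S_1(Tv) = -y⁻¹T²v`, `S_1(T²v) = -T²v`. -/
def SMt3 (y : k) : Module.End k (Fin 3 → k) := Matrix.mulVecLin
  !![-1, 0, 0; 0, 0, 0; 0, -y⁻¹, -1]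

/-- The action of `S_1` on `N_3(z,y)`: `S_1v = -v`, `S_1(Tv) = 0`, `S_1(T²v) = -yTv - T²v`. -/
def SN3 (y : k) : Module.End k (Fin 3 → k) := Matrix.mulVecLin
  !![-1, 0, 0; 0, 0, -y; 0, 0, -1]

/-- The action of `S_1` on `Ñ_3(z,y)`: `S_1v = 0`, `S_1(Tv) = 0`, `S_1(T²v) = yTv - T²v`. -/
def SNt3 (y : k) : Module.End k (Fin 3 → k) := Matrix.mulVecLin
  !![0, 0, 0; 0, 0, y; 0, 0, -1]

/-- The action of `S_1` on `P_3(z)`: `S_1v = 0`, `S_1(Tv) = 0`, `S_1(T²v) = -T²v`. -/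
def SP3 : Module.End k (Fin 3 → k) := Matrix.mulVecLin
  !![0, 0, 0; 0, 0, 0; 0, 0, -1]

/-- The action of `S_1` on `P̃_3(z)`: `S_1v = -v`, `S_1(Tv) = 0`, `S_1(T²v) = -T²v`. -/
def SPt3 : Module.End k (Fin 3 → k) := Matrix.mulVecLin
  !![-1, 0, 0; 0, 0, 0; 0, 0, -1]

/-- The action of `S_1` on `M_2(y)`: `S_1w = -w`, `S_1(Tw) = 0`. -/
def SM2 : Module.End k (Fin 2 → k) := Matrix.mulVecLin !![-1, 0; 0, 0]

/-- The action of `S_1` on `M̃_2(y)`: `S_1w = 0`, `S_1(Tw) = -Tw`. -/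
def SMt2 : Module.End k (Fin 2 → k) := Matrix.mulVecLin !![0, 0; 0, -1]

end

theorem Tmat6_apply (k : Type) [Field k] (z : k) (x : Fin 6 → k) :
    Tmat6 k z x = ![z * x 2, x 0, x 1, z * x 5, x 3, x 4] := by
  ext i
  fin_cases i <;> simp [Tmat6, Matrix.mulVec, dotProduct, Fin.sum_univ_six]

theorem SLt6_apply (k : Type) [Field k] (z y : k) (x : Fin 6 → k) :
    SLt6 k z y x = ![0, 0, -x 2 + y / z * x 4, x 0 - x 3, 0, -x 5] := by
  ext i
  fin_cases i <;> simp [SLt6, Matrix.mulVec, dotProduct, Fin.sum_univ_six, sub_eq_add_neg]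

/-- The inverse of `T` on the six-dimensional space. -/
noncomputable def Tinv6 (k : Type) [Field k] (z : k) : Module.End k (Fin 6 → k) :=
  z⁻¹ • (Tmat6 k z * Tmat6 k z)

theorem Tinv6_apply (k : Type) [Field k] (z : k) (hz : z ≠ 0) (x : Fin 6 → k) :
    Tinv6 k z x = ![x 1, x 2, z⁻¹ * x 0, x 4, x 5, z⁻¹ * x 3] := by
  ext i
  fin_cases i <;> simp [Tinv6, Tmat6_apply, hz]

/-- The images of the four generators. -/
noncomputable def genLt6 (k : Type) [Field k] (z y : k) : Fin 4 → Module.End k (Fin 6 → k) :=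
  ![Tmat6 k z, Tinv6 k z, SLt6 k z y, Tinv6 k z * SLt6 k z y * Tmat6 k z]

theorem genLt6_rel (k : Type) [Field k] (z y : k) (hz : z ≠ 0)
    ⦃a b : FreeAlgebra k (Fin 4)⦄ (h : HeckeRel k 0 a b) :
    FreeAlgebra.lift k (genLt6 k z y) a = FreeAlgebra.lift k (genLt6 k z y) b := by
  cases h <;>
  · simp only [map_mul, map_add, map_sub, map_pow, map_one, map_zero, FreeAlgebra.lift_ι_apply]
    refine LinearMap.ext fun x => ?_
    ext i
    fin_cases i <;>
      simp [genLt6, Tmat6_apply, SLt6_apply, Tinv6_apply, hz, pow_succ] <;>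
      try (field_simp <;> try ring)

theorem Lt6_simple (k : Type) [Field k] (z y : k) (hz : z ≠ 0) (hy : y ≠ 0)
    (W : Submodule k (Fin 6 → k)) (hT : ∀ x ∈ W, Tmat6 k z x ∈ W)
    (hS : ∀ x ∈ W, SLt6 k z y x ∈ W) : W = ⊥ ∨ W = ⊤ := by
  by_cases hf : ∀ x ∈ W, x 2 - y / z * x 4 - x 5 = 0
  · left
    rw [Submodule.eq_bot_iff]
    have h5 : ∀ x ∈ W, x 5 = 0 := by
      intro x hx
      have h1 := hf _ (hT _ (hS x hx))
      have h2 := hf _ (hT _ (hT _ (hS x hx)))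
      simp [Tmat6_apply, SLt6_apply, hz, hy] at h1 h2
      grind
    intro x hx
    have a5 := h5 x hx
    have a4 := h5 _ (hT x hx)
    have a3 := h5 _ (hT _ (hT x hx))
    have b2 := hf x hx
    have b1 := hf _ (hT x hx)
    have b0 := hf _ (hT _ (hT x hx))
    simp [Tmat6_apply] at a4 a3 b1 b0
    ext i
    fin_cases i <;> simp <;> grind
  · right
    push Not at hf
    obtain ⟨x, hx, hne⟩ := hf
    have e5 : (![0, 0, 0, 0, 0, 1] : Fin 6 → k) ∈ W := by
      have h := hS _ (hT _ (hT _ (hS _ (hT _ (hS x hx)))))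
      have h' := W.smul_mem (z * (x 2 - y / z * x 4 - x 5))⁻¹ h
      convert h' using 1
      ext i
      fin_cases i <;> simp [Tmat6_apply, SLt6_apply]
      field_simp
      field_simp at hne
      grind
    have e3 : (![0, 0, 0, 1, 0, 0] : Fin 6 → k) ∈ W := by
      convert W.smul_mem z⁻¹ (hT _ e5) using 1
      ext i
      fin_cases i <;> simp [Tmat6_apply, hz]
    have e4 : (![0, 0, 0, 0, 1, 0] : Fin 6 → k) ∈ W := by
      convert hT _ e3 using 1
      ext i
      fin_cases i <;> simp [Tmat6_apply]
    have e2 : (![0, 0, 1, 0, 0, 0] : Fin 6 → k) ∈ W := by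
      convert W.smul_mem (z / y) (hS _ e4) using 1
      ext i
      fin_cases i <;> simp [SLt6_apply, hz, hy]
    have e0 : (![1, 0, 0, 0, 0, 0] : Fin 6 → k) ∈ W := by
      convert W.smul_mem z⁻¹ (hT _ e2) using 1
      ext i
      fin_cases i <;> simp [Tmat6_apply, hz]
    have e1 : (![0, 1, 0, 0, 0, 0] : Fin 6 → k) ∈ W := by
      convert hT _ e0 using 1
      ext i
      fin_cases i <;> simp [Tmat6_apply]
    rw [Submodule.eq_top_iff']
    intro u
    have h := W.add_mem (W.add_mem (W.add_mem (W.add_mem (W.add_mem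
      (W.smul_mem (u 0) e0) (W.smul_mem (u 1) e1)) (W.smul_mem (u 2) e2))
      (W.smul_mem (u 3) e3)) (W.smul_mem (u 4) e4)) (W.smul_mem (u 5) e5)
    convert h using 1
    ext i
    fin_cases i <;> simp


/-- For `z, y ∈ k^×`, the formulas defining `L̃_6(z,y)` satisfy the defining relations of `H_k`, so they endow the `6`-dimensional `k`-vector space with an `H_k`-module structure, and the `H_k`-module `L̃_6(z,y)` is simple. -/
theorem statement10 (p : ℕ) [Fact p.Prime] (k : Type) [Field k] [IsAlgClosed k] [CharP k p]
    (z y : kˣ) :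
    ∃ ρ : Hk k →ₐ[k] Module.End k (Fin 6 → k),
      ρ (HeckeAlg.T k 0) = Tmat6 k z ∧ ρ (HeckeAlg.S1 k 0) = SLt6 k z y ∧
      (∀ W : Submodule k (Fin 6 → k), (∀ a : Hk k, ∀ x ∈ W, ρ a x ∈ W) → W = ⊥ ∨ W = ⊤) := by
  have hz : (z : k) ≠ 0 := z.ne_zero
  have hy : (y : k) ≠ 0 := y.ne_zero
  have hρ : ∀ i, RingQuot.liftAlgHom k ⟨FreeAlgebra.lift k (genLt6 k z y), genLt6_rel k z y hz⟩
      (HeckeAlg.gen k 0 i) = genLt6 k z y i := by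
    intro i
    rw [HeckeAlg.gen, RingQuot.liftAlgHom_mkAlgHom_apply, FreeAlgebra.lift_ι_apply]
  refine ⟨RingQuot.liftAlgHom k
    ⟨FreeAlgebra.lift k (genLt6 k z y), genLt6_rel k z y hz⟩, hρ 0, hρ 2, ?_⟩
  intro W hW
  refine Lt6_simple k z y hz hy W (fun x hx => ?_) (fun x hx => ?_)
  · have h := hW (HeckeAlg.gen k 0 0) x hx
    rw [hρ] at h
    exact h
  · have h := hW (HeckeAlg.gen k 0 2) x hx
    rw [hρ] at h
    exact h
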